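/- For every odd integer n ≥ 5, there is no entropy of mixing S : Ω_n → ℝ. -/

import Mathlib

open Real

noncomputable section

/-- The ambient vector space ℝ³. -/
abbrev V3 : Type := Fin 3 → ℝ

/-- The linear functional on ℝ³ given by the Euclidean inner product with `v`. -/
def dotL (v : V3) : V3 →ₗ[ℝ] ℝ :=
  ∑ i, v i • (LinearMap.proj i : V3 →ₗ[ℝ] ℝ)

/-- The unit effect `u (x, y, z) = z`. -/
def uEff : V3 →ₗ[ℝ] ℝ := LinearMap.proj 2

/-- `e` is an effect on `Ω`: a linear functional with values in `[0,1]` on `Ω`. -/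
def IsEffect (Ω : Set V3) (e : V3 →ₗ[ℝ] ℝ) : Prop :=
  ∀ ω ∈ Ω, 0 ≤ e ω ∧ e ω ≤ 1

/-- The states `ω 0, …, ω (l-1)` are perfectly distinguishable in `Ω`:
there are effects summing to the unit effect with `e i (ω j) = δ_{ij}`. -/
def PerfDist (Ω : Set V3) {l : ℕ} (ω : Fin l → V3) : Prop :=
  ∃ e : Fin l → (V3 →ₗ[ℝ] ℝ),
    (∀ i, IsEffect Ω (e i)) ∧ (∑ i, e i) = uEff ∧
    ∀ i j, e i (ω j) = if i = j then 1 else 0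

/-- `S` is an entropy of mixing on `Ω`: it vanishes on extreme points, and for every
finite family of perfectly distinguishable states and every probability weight,
`S (Σ pᵢ ωᵢ) = Σ pᵢ S(ωᵢ) − Σ pᵢ log pᵢ` (note `Real.log 0 = 0`, so `0 log 0 = 0`). -/
def IsEntropyOfMixing (Ω : Set V3) (S : V3 → ℝ) : Prop :=
  (∀ ω ∈ Set.extremePoints ℝ Ω, S ω = 0) ∧
  ∀ (l : ℕ) (ω : Fin l → V3), (∀ j, ω j ∈ Ω) → PerfDist Ω ω →
    ∀ p : Fin l → ℝ, (∀ i, 0 ≤ p i) → (∑ i, p i) = 1 →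
      S (∑ i, p i • ω i) = (∑ i, p i * S (ω i)) - ∑ i, p i * Real.log (p i)

/-- `r_n = √(1 / cos (π/n))`. -/
def rn (n : ℕ) : ℝ := Real.sqrt (1 / Real.cos (π / n))

/-- The pure states `ω_i^n` of the `n`-gon theory (indices mod `n` via periodicity). -/
def pur (n : ℕ) (i : ℤ) : V3 :=
  ![rn n * Real.cos (2 * π * i / n), rn n * Real.sin (2 * π * i / n), 1]

/-- The `n`-gon state space `Ω_n`: the convex hull of the `n` pure states. -/
def Omega (n : ℕ) : Set V3 :=
  convexHull ℝ {x : V3 | ∃ i : Fin n, x = pur n (i : ℤ)}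

/-- The extreme effect `e_i^n` for even `n`. -/
def effE (n : ℕ) (i : ℤ) : V3 →ₗ[ℝ] ℝ :=
  dotL ((1/2 : ℝ) •
    ![rn n * Real.cos ((2*i-1) * π / n), rn n * Real.sin ((2*i-1) * π / n), 1])

/-- The extreme effect `e_i^n` for odd `n`. -/
def effO (n : ℕ) (i : ℤ) : V3 →ₗ[ℝ] ℝ :=
  dotL ((1/(1 + rn n ^ 2)) •
    ![rn n * Real.cos (2*i*π/n), rn n * Real.sin (2*i*π/n), 1])

/-- The disk state space `Ω_∞ = {(x,y,1) : x² + y² ≤ 1}`. -/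
def OmegaInf : Set V3 := {x : V3 | x 2 = 1 ∧ (x 0)^2 + (x 1)^2 ≤ 1}

/-- The pure states `ω_θ^∞` of the disk theory. -/
def purInf (θ : ℝ) : V3 := ![Real.cos θ, Real.sin θ, 1]

/-- The extreme effects `e_θ^∞` of the disk theory. -/
def effInf (θ : ℝ) : V3 →ₗ[ℝ] ℝ :=
  dotL ((1/2 : ℝ) • ![Real.cos θ, Real.sin θ, 1])

/-- The binary (1-bit Shannon) entropy `H(p) = −p log p − (1−p) log (1−p)`. -/
def H (p : ℝ) : ℝ := -(p * Real.log p) - (1 - p) * Real.log (1 - p)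

/-!
Write `n = 2m + 1`. The points `ω₀, ω₁, ωₘ, ωₘ₊₁` are the vertices of a trapezoid with parallel
sides `ω₀ωₘ₊₁` and `ω₁ωₘ`, of length ratio `a`. Every point of the diagonal `ω₁ωₘ₊₁` lies on a
segment joining `ω₀` to a point of the edge `ωₘωₘ₊₁`. Both decompositions are mixtures of perfectly
distinguishable states, so equating the entropies they give determines the entropy along the edge as
an explicit function of `a` and the position. The mirror image of the trapezoid, with `ω₋₁` in place
of `ω₁`, gives the same function with the two ends of the edge exchanged. Hence this function would
be symmetric about the midpoint, but its derivative there is `a log a + (1 - a) log (1 + a)`, which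
is negative because `log x < x - 1` for `x ≠ 1` and `0 < a < 1`.
-/

open Set Metric
open scoped Matrix

/-! ### Extreme points, roots of unity, reflections -/

lemma subset_extremePoints_convexHull_of_subset_sphere {E : Type*} [NormedAddCommGroup E]
    [NormedSpace ℝ E] [StrictConvexSpace ℝ E] {s : Set E} {c : E} {r : ℝ} (hr : r ≠ 0)
    (hs : s ⊆ sphere c r) : s ⊆ (convexHull ℝ s).extremePoints ℝ := fun _ hx ↦
  inter_extremePoints_subset_extremePoints_of_subset
    (convexHull_min (hs.trans sphere_subset_closedBall) (convex_closedBall c r))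
    ⟨subset_convexHull ℝ s hx,
      StrictConvexSpace.sphere_subset_extremePoints_closedBall c hr (hs hx)⟩

lemma subset_extremePoints_convexHull_of_dotProduct_self_eq {ι : Type*} [Fintype ι]
    {s : Set (ι → ℝ)} {c : ℝ} (hc : 0 < c) (hs : ∀ x ∈ s, x ⬝ᵥ x = c) :
    s ⊆ (convexHull ℝ s).extremePoints ℝ := by
  let f := (WithLp.linearEquiv 2 ℝ (ι → ℝ)).symm
  have hsphere : f '' s ⊆ sphere 0 (√c) := by
    rintro _ ⟨x, hx, rfl⟩
    rw [mem_sphere_zero_iff_norm, EuclideanSpace.norm_eq, ← hs x hx]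
    simp [f, dotProduct, sq]
  have himage := subset_extremePoints_convexHull_of_subset_sphere (sqrt_pos.2 hc).ne' hsphere
  have hhull : convexHull ℝ (f '' s) = f '' convexHull ℝ s :=
    (f.toLinearMap.image_convexHull s).symm
  rwa [hhull, ← image_extremePoints, image_subset_image_iff f.injective] at himage

lemma cos_two_pi_mul_div_le_of_not_dvd {N : ℕ} (hN : N ≠ 0) {k : ℤ} (hk : ¬ (N : ℤ) ∣ k) :
    cos (2 * π * k / N) ≤ cos (2 * π / N) := by
  set b := k.bmod N
  have hb_ne : b ≠ 0 := fun h ↦ hk (Int.dvd_of_bmod_eq_zero h)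
  have hb_le : |b| ≤ N / 2 :=
    abs_le.2 ⟨Int.le_bmod (by omega), by have := Int.bmod_lt (x := k) (m := N) (by omega); omega⟩
  have hN' : (0 : ℝ) < N := by positivity
  have hlo : (1 : ℝ) ≤ |(b : ℝ)| := by exact_mod_cast Int.one_le_abs hb_ne
  have hhi : 2 * |(b : ℝ)| ≤ N := by exact_mod_cast (show 2 * |b| ≤ N by omega)
  have hkb : (k : ℝ) = b + N * k.bdiv N := by exact_mod_cast (Int.bmod_add_bdiv k N).symm
  have hangle : 2 * π * k / N = 2 * π * b / N + k.bdiv N * (2 * π) := by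
    rw [hkb]
    field_simp
  rw [hangle, cos_add_int_mul_two_pi, ← cos_abs, abs_div, abs_mul, abs_of_pos two_pi_pos,
    abs_of_pos hN']
  refine cos_le_cos_of_nonneg_of_le_pi (by positivity) ?_ ?_
  · rw [div_le_iff₀ hN']
    nlinarith [pi_pos]
  · exact div_le_div_of_nonneg_right (le_mul_of_one_le_right two_pi_pos.le hlo) hN'.le

lemma sin_div_sin_mem_Ioo {x y : ℝ} (hx : 0 < x) (hxy : x < y) (hy : y ≤ π / 2) :
    sin x / sin y ∈ Ioo 0 1 := by
  have hsin_x : 0 < sin x := sin_pos_of_pos_of_lt_pi hx (by linarith [pi_pos])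
  have hsin_lt : sin x < sin y :=
    sin_lt_sin_of_lt_of_le_pi_div_two (by linarith [pi_pos]) hy hxy
  have hsin_y := hsin_x.trans hsin_lt
  exact ⟨div_pos hsin_x hsin_y, (div_lt_one hsin_y).2 hsin_lt⟩

open Filter Topology in
lemma deriv_eq_zero_of_eventuallyEq_comp_const_sub {f : ℝ → ℝ} {c x : ℝ} (hx : c - x = x)
    (hf : f =ᶠ[𝓝 x] fun y ↦ f (c - y)) : deriv f x = 0 := by
  have h := hf.deriv_eq
  rw [deriv_comp_const_sub, hx] at h
  linarith

/-! ### The entropy function on a leg of a trapezoid -/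

lemma H_eq_negMulLog_add (p : ℝ) : H p = negMulLog p + negMulLog (1 - p) := by
  simp only [H, negMulLog]
  ring

lemma mul_H_div {d : ℝ} (hd : d ≠ 0) (x : ℝ) :
    d * H (x / d) = negMulLog x + negMulLog (d - x) - negMulLog d := by
  have hscale (y : ℝ) : negMulLog y = y / d * negMulLog d + d * negMulLog (y / d) := by
    rw [← negMulLog_mul, mul_div_cancel₀ _ hd]
  have hcompl : 1 - x / d = (d - x) / d := by field_simp
  rw [H_eq_negMulLog_add, hcompl, hscale x, hscale (d - x)]
  field_simp
  ring

/-- The entropy which a trapezoid `A D B C` of pure states, with `D - B = a • (A - C)`, forces at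
the point `s • B + (1 - s) • C` of its leg `BC`; see `IsEntropyOfMixing.apply_leg`. -/
def legEntropy (a s : ℝ) : ℝ :=
  negMulLog s - negMulLog (a * s) + negMulLog (1 + a * s - s)

lemma eq_legEntropy {a s t : ℝ} (has : 1 + a * s ≠ 0)
    (h : H (s / (1 + a * s)) = (1 - a * s / (1 + a * s)) * t + H (a * s / (1 + a * s))) :
    t = legEntropy a s := by
  have hweight : (1 + a * s) * (1 - a * s / (1 + a * s)) = 1 := by
    field_simp
    ring
  have hbig := mul_H_div has s
  have hsmall := mul_H_div has (a * s)
  rw [add_sub_cancel_right, negMulLog_one] at hsmall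
  rw [legEntropy]
  linear_combination hbig - hsmall - t * hweight - (1 + a * s) * h

lemma deriv_legEntropy_half {a : ℝ} (ha : 0 < a) :
    deriv (legEntropy a) (1 / 2) = a * log a + (1 - a) * log (1 + a) := by
  have hlin : HasDerivAt (fun s ↦ a * s) a (1 / 2) := hasDerivAt_const_mul a
  have haff : HasDerivAt (fun s ↦ 1 + a * s - s) (a - 1) (1 / 2) :=
    (hlin.const_add 1).sub (hasDerivAt_id _)
  have hcenter : 1 + a * (1 / 2) - 1 / 2 = (1 + a) / 2 := by ring
  have hderiv := ((hasDerivAt_negMulLog (x := 1 / 2) (by norm_num)).sub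
    ((hasDerivAt_negMulLog (by positivity)).comp (1 / 2) hlin)).add
    ((hasDerivAt_negMulLog (by rw [hcenter]; positivity)).comp (1 / 2) haff)
  refine hderiv.deriv.trans ?_
  rw [hcenter, one_div, log_mul ha.ne' (by norm_num), log_div (by positivity) two_ne_zero, log_inv]
  ring

lemma deriv_legEntropy_half_neg {a : ℝ} (ha : a ∈ Ioo 0 1) :
    deriv (legEntropy a) (1 / 2) < 0 := by
  obtain ⟨ha₀, ha₁⟩ := ha
  have hlog : log a < a - 1 := log_lt_sub_one_of_pos ha₀ ha₁.ne
  have hlog_one_add : log (1 + a) < a := by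
    linarith [log_lt_sub_one_of_pos (show 0 < 1 + a by linarith) (by linarith)]
  calc deriv (legEntropy a) (1 / 2) = a * log a + (1 - a) * log (1 + a) :=
        deriv_legEntropy_half ha₀
    _ < a * (a - 1) + (1 - a) * a := by
        gcongr
    _ = 0 := by ring

lemma exists_legEntropy_ne_legEntropy_one_sub {a : ℝ} (ha : a ∈ Ioo 0 1) :
    ∃ s ∈ Icc (0 : ℝ) 1, legEntropy a s ≠ legEntropy a (1 - s) := by
  by_contra! hsymm
  refine (deriv_legEntropy_half_neg ha).ne
    (deriv_eq_zero_of_eventuallyEq_comp_const_sub (c := 1) (by norm_num) ?_)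
  filter_upwards [Icc_mem_nhds (a := 0) (b := 1) (by norm_num) (by norm_num)] with s hs
  exact hsymm s hs

/-! ### Mixtures of distinguishable states -/

section Mixing

variable {Ω : Set V3} {S : V3 → ℝ} {e : V3 →ₗ[ℝ] ℝ}

lemma IsEffect.uEff_sub (hu : ∀ ω ∈ Ω, uEff ω = 1) (he : IsEffect Ω e) :
    IsEffect Ω (uEff - e) := by
  intro ω hω
  rw [LinearMap.sub_apply, hu ω hω]
  exact ⟨sub_nonneg.2 (he ω hω).2, sub_le_self 1 (he ω hω).1⟩

lemma IsEffect.convexHull (he : IsEffect Ω e) : IsEffect (convexHull ℝ Ω) e :=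
  convexHull_min he ((convex_Icc 0 1).linear_preimage e)

lemma perfDist_pair (hu : ∀ ω ∈ Ω, uEff ω = 1) {x y : V3} (hx : x ∈ Ω) (hy : y ∈ Ω)
    (he : IsEffect Ω e) (hex : e x = 1) (hey : e y = 0) : PerfDist Ω ![x, y] := by
  refine ⟨![e, uEff - e], ?_, by simp, ?_⟩
  · exact Fin.forall_fin_two.2 ⟨he, he.uEff_sub hu⟩
  · simp [Fin.forall_fin_two, hex, hey, hu x hx, hu y hy]

lemma IsEntropyOfMixing.apply_smul_add_smul (hS : IsEntropyOfMixing Ω S)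
    (hu : ∀ ω ∈ Ω, uEff ω = 1) {x y : V3} (hx : x ∈ Ω) (hy : y ∈ Ω) (he : IsEffect Ω e)
    (hex : e x = 1) (hey : e y = 0) {p : ℝ} (hp : p ∈ Icc 0 1) :
    S (p • x + (1 - p) • y) = p * S x + (1 - p) * S y + H p := by
  have h := hS.2 2 ![x, y] (Fin.forall_fin_two.2 ⟨hx, hy⟩) (perfDist_pair hu hx hy he hex hey)
    ![p, 1 - p] (Fin.forall_fin_two.2 ⟨hp.1, sub_nonneg.2 hp.2⟩) (by simp)
  simp only [Fin.sum_univ_two, Matrix.cons_val_zero, Matrix.cons_val_one] at h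
  rw [h, H]
  ring

/-- A trapezoid with vertices `A, D, B, C` in cyclic order, whose parallel sides `AC` and `DB` have
length ratio `a`, such that an effect distinguishes `A` from the whole leg `BC`, and another one the
ends `D` and `C` of a diagonal. Such a trapezoid determines every entropy of mixing along `BC`. -/
structure IsDistinguishedTrapezoid (Ω : Set V3) (a : ℝ) (A B C D : V3) : Prop where
  pure_A : A ∈ Ω.extremePoints ℝ
  mem_B : B ∈ Ω
  pure_C : C ∈ Ω.extremePoints ℝ
  pure_D : D ∈ Ω.extremePoints ℝ
  sub_eq_smul_sub : D - B = a • (A - C)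
  exists_effect_leg : ∃ e, IsEffect Ω e ∧ e A = 1 ∧ e B = 0 ∧ e C = 0
  exists_effect_diagonal : ∃ e, IsEffect Ω e ∧ e D = 1 ∧ e C = 0

variable {a s : ℝ} {A B C D E : V3}

lemma IsDistinguishedTrapezoid.diagonal_eq (h : IsDistinguishedTrapezoid Ω a A B C D)
    (has : 1 + a * s ≠ 0) :
    (s / (1 + a * s)) • D + (1 - s / (1 + a * s)) • C =
      (a * s / (1 + a * s)) • A + (1 - a * s / (1 + a * s)) • (s • B + (1 - s) • C) := by
  have hweight : s / (1 + a * s) = (1 - a * (s / (1 + a * s))) * s := by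
    linear_combination div_mul_cancel₀ s has
  rw [sub_eq_iff_eq_add.1 h.sub_eq_smul_sub, mul_div_assoc]
  ext i
  simp only [Pi.add_apply, Pi.smul_apply, Pi.sub_apply, smul_eq_mul]
  linear_combination (B i - C i) * hweight

lemma IsEntropyOfMixing.apply_leg (hS : IsEntropyOfMixing Ω S) (hΩ : Convex ℝ Ω)
    (hu : ∀ ω ∈ Ω, uEff ω = 1) (h : IsDistinguishedTrapezoid Ω a A B C D) (ha : 0 ≤ a)
    (hs : s ∈ Icc 0 1) : S (s • B + (1 - s) • C) = legEntropy a s := by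
  obtain ⟨e, he, heA, heB, heC⟩ := h.exists_effect_leg
  obtain ⟨f, hf, hfD, hfC⟩ := h.exists_effect_diagonal
  have has : 0 ≤ a * s := mul_nonneg ha hs.1
  have has_pos : 0 < 1 + a * s := by positivity
  have hleg : s • B + (1 - s) • C ∈ Ω :=
    hΩ h.mem_B h.pure_C.1 hs.1 (sub_nonneg.2 hs.2) (add_sub_cancel s 1)
  have hdiagonal := hS.apply_smul_add_smul hu h.pure_D.1 h.pure_C.1 hf hfD hfC
    (p := s / (1 + a * s)) ⟨div_nonneg hs.1 has_pos.le, (div_le_one has_pos).2 (by linarith [hs.2])⟩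
  have hcevian := hS.apply_smul_add_smul hu h.pure_A.1 hleg he heA (by simp [heB, heC])
    (p := a * s / (1 + a * s)) ⟨by positivity, (div_le_one has_pos).2 (by linarith)⟩
  rw [← h.diagonal_eq has_pos.ne', hdiagonal, hS.1 _ h.pure_A, hS.1 _ h.pure_C,
    hS.1 _ h.pure_D] at hcevian
  exact eq_legEntropy has_pos.ne' (by linarith)

theorem IsDistinguishedTrapezoid.not_isEntropyOfMixing
    (hD : IsDistinguishedTrapezoid Ω a A B C D) (hE : IsDistinguishedTrapezoid Ω a A C B E)
    (hΩ : Convex ℝ Ω) (hu : ∀ ω ∈ Ω, uEff ω = 1) (ha : a ∈ Ioo 0 1) :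
    ¬ IsEntropyOfMixing Ω S := by
  intro hS
  obtain ⟨s, hs, hne⟩ := exists_legEntropy_ne_legEntropy_one_sub ha
  refine hne ?_
  rw [← hS.apply_leg hΩ hu hD ha.1.le hs,
    ← hS.apply_leg hΩ hu hE ha.1.le (Icc.mem_iff_one_sub_mem.1 hs), sub_sub_cancel, add_comm]

end Mixing

/-! ### The geometry of the regular polygon -/

section Polygon

variable {n : ℕ}

lemma pur_periodic (hn : n ≠ 0) : Function.Periodic (pur n) n := by
  intro i
  have hangle : 2 * π * (i + n : ℤ) / n = 2 * π * i / n + 2 * π := by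
    push_cast
    field_simp
  simp only [pur, hangle, cos_add_two_pi, sin_add_two_pi]

lemma Omega_eq_convexHull_range (hn : n ≠ 0) : Omega n = convexHull ℝ (range (pur n)) := by
  refine congrArg (convexHull ℝ) (Subset.antisymm ?_ ?_)
  · rintro _ ⟨i, rfl⟩
    exact mem_range_self _
  · rintro _ ⟨i, rfl⟩
    have hmod : 0 ≤ i % n ∧ i % n < n :=
      ⟨Int.emod_nonneg i (by omega), Int.emod_lt_of_pos i (by omega)⟩
    refine ⟨⟨(i % n).toNat, by omega⟩, ?_⟩
    rw [Int.toNat_of_nonneg hmod.1, Int.emod_def, mul_comm]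
    exact ((pur_periodic hn).sub_int_mul_eq _).symm

lemma pur_dotProduct_pur (i j : ℤ) :
    pur n i ⬝ᵥ pur n j = rn n ^ 2 * cos (2 * π * (j - i : ℤ) / n) + 1 := by
  have hangle : 2 * π * (j - i : ℤ) / n = 2 * π * j / n - 2 * π * i / n := by
    push_cast
    ring
  rw [hangle, cos_sub]
  simp only [pur, dotProduct, Fin.sum_univ_three, Matrix.cons_val]
  ring

lemma pur_dotProduct_self (i : ℤ) : pur n i ⬝ᵥ pur n i = rn n ^ 2 + 1 := by
  simp [pur_dotProduct_pur]

lemma pur_mem_extremePoints (hn : n ≠ 0) (i : ℤ) : pur n i ∈ (Omega n).extremePoints ℝ := by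
  rw [Omega_eq_convexHull_range hn]
  exact subset_extremePoints_convexHull_of_dotProduct_self_eq (c := rn n ^ 2 + 1) (by positivity)
    (forall_mem_range.2 pur_dotProduct_self) (mem_range_self i)

lemma uEff_eq_one_of_mem_Omega {x : V3} (hx : x ∈ Omega n) : uEff x = 1 := by
  refine convexHull_min ?_ ((convex_singleton 1).linear_preimage uEff) hx
  rintro _ ⟨i, rfl⟩
  simp [uEff, pur]

lemma cos_pi_div_pos (hn : 3 ≤ n) : 0 < cos (π / n) := by
  have hn' : (3 : ℝ) ≤ n := by exact_mod_cast hn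
  refine cos_pos_of_mem_Ioo ⟨by linarith [show 0 ≤ π / n by positivity, pi_pos], ?_⟩
  exact div_lt_div_of_pos_left pi_pos two_pos (by linarith)

lemma rn_sq_mul_cos (hn : 3 ≤ n) : rn n ^ 2 * cos (π / n) = 1 := by
  have hcos := cos_pi_div_pos hn
  rw [rn, sq_sqrt (by positivity), one_div_mul_cancel hcos.ne']

lemma effO_apply (i : ℤ) (x : V3) : effO n i x = (pur n i ⬝ᵥ x) / (1 + rn n ^ 2) := by
  have hangle : 2 * i * π / n = 2 * π * i / n := by ring
  simp only [effO, dotL, pur, hangle, dotProduct, Fin.sum_univ_three, LinearMap.add_apply,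
    LinearMap.smul_apply, LinearMap.proj_apply, Pi.smul_apply, smul_eq_mul, Matrix.cons_val]
  ring

lemma effO_pur (i j : ℤ) :
    effO n i (pur n j) = (rn n ^ 2 * cos (2 * π * (j - i : ℤ) / n) + 1) / (1 + rn n ^ 2) := by
  rw [effO_apply, pur_dotProduct_pur]

lemma effO_pur_self (i : ℤ) : effO n i (pur n i) = 1 := by
  rw [effO_apply, pur_dotProduct_self, add_comm, div_self (by positivity)]

lemma effO_pur_eq_zero (hn : 3 ≤ n) {i j : ℤ} (hij : (2 * (j - i) - n).natAbs = 1) :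
    effO n i (pur n j) = 0 := by
  have hn' : (n : ℝ) ≠ 0 := by positivity
  have hangle : 2 * π * (j - i : ℤ) / n = (2 * (j - i) - n : ℤ) * (π / n) + π := by
    push_cast
    field_simp
    ring
  have hcos : cos ((2 * (j - i) - n : ℤ) * (π / n)) = cos (π / n) := by
    rcases Int.natAbs_eq_iff.1 hij with h | h <;> simp [h]
  rw [effO_pur, hangle, cos_add_pi, hcos]
  simp [rn_sq_mul_cos hn]

lemma neg_cos_pi_div_le_cos_of_odd (hn : Odd n) (k : ℤ) :
    -cos (π / n) ≤ cos (2 * π * k / n) := by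
  have hn₀ : (n : ℝ) ≠ 0 := by exact_mod_cast hn.pos.ne'
  have hodd : ¬ ((2 * n : ℕ) : ℤ) ∣ 2 * k - n := by
    obtain ⟨m, rfl⟩ := hn
    rintro ⟨q, hq⟩
    push_cast at hq
    lia
  have h := cos_two_pi_mul_div_le_of_not_dvd (mul_ne_zero two_ne_zero hn.pos.ne') hodd
  have hangle : 2 * π * (2 * k - n : ℤ) / (2 * n : ℕ) = 2 * π * k / n - π := by
    push_cast
    field_simp
  have hhalf : 2 * π / (2 * n : ℕ) = π / n := by
    push_cast
    field_simp
  rw [hangle, hhalf, cos_sub_pi] at h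
  linarith

lemma isEffect_effO (hn : 3 ≤ n) (hodd : Odd n) (i : ℤ) : IsEffect (Omega n) (effO n i) := by
  rw [Omega_eq_convexHull_range (by omega)]
  refine IsEffect.convexHull (forall_mem_range.2 fun j ↦ ?_)
  rw [effO_pur]
  have hr := rn_sq_mul_cos hn
  have hlo := mul_le_mul_of_nonneg_left (neg_cos_pi_div_le_cos_of_odd hodd (j - i))
    (sq_nonneg (rn n))
  have hhi := mul_le_of_le_one_right (sq_nonneg (rn n)) (cos_le_one (2 * π * (j - i : ℤ) / n))
  exact ⟨div_nonneg (by linarith) (by positivity), (div_le_one (by positivity)).2 (by linarith)⟩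

lemma pur_sub_pur (i j : ℤ) : pur n i - pur n j =
    (2 * rn n * sin (π * (i - j : ℤ) / n)) •
      ![-sin (π * (i + j : ℤ) / n), cos (π * (i + j : ℤ) / n), 0] := by
  have hsum : (2 * π * i / n + 2 * π * j / n) / 2 = π * (i + j : ℤ) / n := by
    push_cast
    ring
  have hdiff : (2 * π * i / n - 2 * π * j / n) / 2 = π * (i - j : ℤ) / n := by
    push_cast
    ring
  have hcos := cos_sub_cos (2 * π * i / n) (2 * π * j / n)
  have hsin := sin_sub_sin (2 * π * i / n) (2 * π * j / n)
  rw [hsum, hdiff] at hcos hsin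
  ext t
  fin_cases t <;>
    simp only [pur, Fin.zero_eta, Fin.mk_one, Fin.reduceFinMk, Pi.sub_apply, Pi.smul_apply,
      smul_eq_mul, Matrix.cons_val]
  · linear_combination rn n * hcos
  · linear_combination rn n * hsin
  · ring

lemma pur_sub_pur_eq_smul {i j k l : ℤ} (hsum : i + j = k + l)
    (hkl : sin (π * (k - l : ℤ) / n) ≠ 0) :
    pur n i - pur n j =
      (sin (π * (i - j : ℤ) / n) / sin (π * (k - l : ℤ) / n)) • (pur n k - pur n l) := by
  rw [pur_sub_pur, pur_sub_pur, hsum, smul_smul]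
  congr 1
  field_simp

lemma isDistinguishedTrapezoid_pur (hn : 3 ≤ n) (hodd : Odd n) {a : ℝ} {i j k l : ℤ}
    (hij : (2 * (j - i) - n).natAbs = 1) (hik : (2 * (k - i) - n).natAbs = 1)
    (hlk : (2 * (k - l) - n).natAbs = 1)
    (hpar : pur n l - pur n j = a • (pur n i - pur n k)) :
    IsDistinguishedTrapezoid (Omega n) a (pur n i) (pur n j) (pur n k) (pur n l) where
  pure_A := pur_mem_extremePoints (by omega) i
  mem_B := (pur_mem_extremePoints (by omega) j).1
  pure_C := pur_mem_extremePoints (by omega) k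
  pure_D := pur_mem_extremePoints (by omega) l
  sub_eq_smul_sub := hpar
  exists_effect_leg := ⟨effO n i, isEffect_effO hn hodd i, effO_pur_self i,
    effO_pur_eq_zero hn hij, effO_pur_eq_zero hn hik⟩
  exists_effect_diagonal :=
    ⟨effO n l, isEffect_effO hn hodd l, effO_pur_self l, effO_pur_eq_zero hn hlk⟩

lemma sin_pi_mul_sub_self_div {r : ℝ} (hr : r ≠ 0) (x : ℝ) :
    sin (π * (x - r) / r) = -sin (π * x / r) := by
  rw [mul_sub, sub_div, mul_div_cancel_right₀ _ hr, sin_sub_pi]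

lemma sin_div_sin_chord_mem_Ioo {m : ℕ} (hm : 2 ≤ m) (hmn : 2 * m ≤ n) :
    sin (π * (m - 1) / n) / sin (π * m / n) ∈ Ioo 0 1 := by
  have hm' : (2 : ℝ) ≤ m := by exact_mod_cast hm
  have hmn' : 2 * (m : ℝ) ≤ n := by exact_mod_cast hmn
  have hn : (0 : ℝ) < n := by linarith
  refine sin_div_sin_mem_Ioo (div_pos (mul_pos pi_pos (by linarith)) hn) ?_ ?_
  · gcongr
    linarith
  · rw [div_le_div_iff₀ hn two_pos]
    nlinarith [pi_pos]

lemma exists_pur_sub_pur_eq_smul {m : ℕ} (hm : 2 ≤ m) (hnm : n = 2 * m + 1) :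
    ∃ a ∈ Ioo (0 : ℝ) 1,
      pur n 1 - pur n m = a • (pur n 0 - pur n (m + 1)) ∧
      pur n (-1) - pur n (m + 1) = a • (pur n 0 - pur n m) := by
  have hn : (n : ℝ) = 2 * m + 1 := by exact_mod_cast hnm
  have hn₀ : (n : ℝ) ≠ 0 := by exact_mod_cast (show n ≠ 0 by omega)
  have hratio := sin_div_sin_chord_mem_Ioo (n := n) hm (by omega)
  have hne : -sin (π * m / n) ≠ 0 := fun h ↦ by simp [neg_eq_zero.1 h] at hratio
  have hright_short : sin (π * (1 - m : ℤ) / n) = -sin (π * (m - 1) / n) := by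
    rw [← sin_neg]
    push_cast
    ring_nf
  have hright_long : sin (π * (0 - (m + 1) : ℤ) / n) = -sin (π * m / n) := by
    rw [← sin_pi_mul_sub_self_div hn₀, show ((0 - (m + 1) : ℤ) : ℝ) = m - n by push_cast; linarith]
  have hleft_short : sin (π * (-1 - (m + 1) : ℤ) / n) = -sin (π * (m - 1) / n) := by
    rw [← sin_pi_mul_sub_self_div hn₀,
      show ((-1 - (m + 1) : ℤ) : ℝ) = m - 1 - n by push_cast; linarith]
  have hleft_long : sin (π * (0 - m : ℤ) / n) = -sin (π * m / n) := by
    rw [← sin_neg]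
    push_cast
    ring_nf
  refine ⟨_, hratio, ?_, ?_⟩
  · rw [pur_sub_pur_eq_smul (k := 0) (l := m + 1) (by ring) (hright_long ▸ hne), hright_short,
      hright_long, neg_div_neg_eq]
  · rw [pur_sub_pur_eq_smul (k := 0) (l := m) (by ring) (hleft_long ▸ hne), hleft_short,
      hleft_long, neg_div_neg_eq]

end Polygon

/-- For every odd integer `n ≥ 5`, there is no entropy of mixing on `Ω_n`. -/
theorem stmt19 (n : ℕ) (hn : 5 ≤ n) (hodd : Odd n) :
    ¬ ∃ S : V3 → ℝ, IsEntropyOfMixing (Omega n) S := by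
  rintro ⟨S, hS⟩
  obtain ⟨m, hm⟩ := hodd
  obtain ⟨a, ha, hright, hleft⟩ := exists_pur_sub_pur_eq_smul (n := n) (m := m) (by omega) hm
  have hD : IsDistinguishedTrapezoid (Omega n) a (pur n 0) (pur n m) (pur n (m + 1)) (pur n 1) :=
    isDistinguishedTrapezoid_pur (by omega) ⟨m, hm⟩ (by omega) (by omega) (by omega) hright
  have hE : IsDistinguishedTrapezoid (Omega n) a (pur n 0) (pur n (m + 1)) (pur n m) (pur n (-1)) :=
    isDistinguishedTrapezoid_pur (by omega) ⟨m, hm⟩ (by omega) (by omega) (by omega) hleft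
  exact hD.not_isEntropyOfMixing hE (convex_convexHull ℝ _) (fun _ ↦ uEff_eq_one_of_mem_Omega) ha hS
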